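/- Let m ≥ 1 and let POS = { min(2^s, m) : s ∈ ℤ_{≥0} } ⊆ {1,…,m} with associated prev and next. Let o ∈ ℝ^m be non-increasing with o ≥ 0 entrywise, and let ρ : POS → ℝ_{≥0} be non-increasing with ρ_k ≤ 2·o_k + o_1/m for every k ∈ POS. Let ρ⃗ ∈ ℝ^m be the expansion of ρ. Then Top_k(ρ⃗) ≤ 4·Top_k(o) for every k ∈ POS, Top_k(ρ⃗) ≤ 8·Top_k(o) for every k ∈ {1,…,m}, and consequently φ(ρ⃗) ≤ 8·φ(o) for every symmetric monotone norm φ : ℝ^m → ℝ. -/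

import Mathlib

/-- The top-`k` norm: the sum of the `k` largest values among `|u 1|, …, |u m|`,
expressed as the supremum over all size-`k` subsets of the sum of absolute values. -/
noncomputable def topk {m : ℕ} (k : ℕ) (u : Fin m → ℝ) : ℝ :=
  sSup {t : ℝ | ∃ S : Finset (Fin m), S.card = k ∧ t = ∑ j ∈ S, |u j|}

/-- The power-of-two index set `POS = { min(2^s, m) : s ∈ ℤ_{≥0} } ⊆ {1,…,m}`. -/
def pow2POS (m : ℕ) : Set ℕ := {k | ∃ s : ℕ, k = min (2 ^ s) m}

/-- `prev(k)`: the largest element of `POS` smaller than `k` (and `prev 1 = 0`). -/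
noncomputable def prevIdx (POS : Set ℕ) (k : ℕ) : ℕ := sSup {t | t ∈ POS ∧ t < k}

/-- The `k`-th entry (1-indexed) of a vector `u ∈ ℝ^m`, for `k ∈ {1,…,m}`. -/
def ent {m : ℕ} (u : Fin m → ℝ) (k : ℕ) : ℝ :=
  if h : k - 1 < m then u ⟨k - 1, h⟩ else 0

/-- The expansion `ρ⃗ ∈ ℝ^m` of `ρ : POS → ℝ`: `ρ⃗_k = ρ_k` if `k ∈ POS`,
and `ρ⃗_k = ρ_{prev(k)}` otherwise (entries 1-indexed). -/
noncomputable def expandVec (m : ℕ) (POS : Set ℕ) (ρ : ℕ → ℝ) : Fin m → ℝ :=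
  fun i =>
    haveI := Classical.dec ((i.val + 1) ∈ POS)
    if (i.val + 1) ∈ POS then ρ (i.val + 1) else ρ (prevIdx POS (i.val + 1))

theorem aux_sum_le (g : ℕ → ℝ) (hg : Antitone g) (S : Finset ℕ) :
    ∑ j ∈ S, g j ≤ ∑ j ∈ Finset.range S.card, g j := by
  induction S using Finset.induction_on_max with
  | empty => simp
  | insert a s hs ih =>
    have ha : a ∉ s := fun h => lt_irrefl _ (hs a h)
    rw [Finset.sum_insert ha, Finset.card_insert_of_notMem ha, Finset.sum_range_succ]
    have hc : s.card ≤ a := by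
      have : s ⊆ Finset.range a := fun x hx => Finset.mem_range.2 (hs x hx)
      simpa using Finset.card_le_card this
    have := hg hc
    linarith

theorem aux_half (O : ℕ → ℝ) (hO : Antitone O) (hn : ∀ n, 0 ≤ O n) (k : ℕ) :
    ∑ i ∈ Finset.range (k + 1), O ((i + 1) / 2) + O 0
      ≤ 2 * ∑ i ∈ Finset.range (k + 1), O i := by
  induction k with
  | zero => simp; linarith
  | succ k ih =>
    have key : ∀ k : ℕ, ∑ i ∈ Finset.range (2 * k + 1), O ((i + 1) / 2) + O 0
        = 2 * ∑ i ∈ Finset.range (k + 1), O i := by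
      intro k
      induction k with
      | zero => simp; ring
      | succ k ih =>
        rw [show 2 * (k + 1) + 1 = (2 * k + 1) + 1 + 1 by ring, Finset.sum_range_succ,
          Finset.sum_range_succ, Finset.sum_range_succ _ (k + 1),
          show (2 * k + 1 + 1) / 2 = k + 1 by omega,
          show (2 * k + 1 + 1 + 1) / 2 = k + 1 by omega]
        linarith
    rw [← key]
    gcongr
    · exact fun _ _ _ => hn _
    · omega

theorem aux_pos {m : ℕ} (ρ : ℕ → ℝ) (i : Fin m) :
    ∃ p ∈ pow2POS m, i.val + 2 ≤ 2 * p ∧ p ≤ m ∧ expandVec m (pow2POS m) ρ i = ρ p := by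
  have hle : ∀ p ∈ pow2POS m, p ≤ m := by
    rintro p ⟨s, rfl⟩
    exact min_le_right _ _
  have hi := i.isLt
  by_cases h : (i.val + 1) ∈ pow2POS m
  · exact ⟨i.val + 1, h, by omega, hle _ h, by simp [expandVec, h]⟩
  · have h1 : 2 ^ Nat.log 2 (i.val + 1) ≤ i.val + 1 := Nat.pow_log_le_self 2 (by omega)
    have h2 : i.val + 1 < 2 ^ (Nat.log 2 (i.val + 1) + 1) :=
      Nat.lt_pow_succ_log_self (by norm_num) _
    have hmem : 2 ^ Nat.log 2 (i.val + 1) ∈ pow2POS m :=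
      ⟨Nat.log 2 (i.val + 1), (min_eq_left (by omega)).symm⟩
    have hlt : 2 ^ Nat.log 2 (i.val + 1) < i.val + 1 :=
      lt_of_le_of_ne h1 (fun e => h (e ▸ hmem))
    have hb : BddAbove {t | t ∈ pow2POS m ∧ t < i.val + 1} := ⟨i.val + 1, fun t ht => ht.2.le⟩
    have hs : prevIdx (pow2POS m) (i.val + 1) ∈ {t | t ∈ pow2POS m ∧ t < i.val + 1} :=
      Nat.sSup_mem ⟨_, hmem, hlt⟩ hb
    have hge : 2 ^ Nat.log 2 (i.val + 1) ≤ prevIdx (pow2POS m) (i.val + 1) :=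
      le_csSup hb ⟨hmem, hlt⟩
    refine ⟨prevIdx (pow2POS m) (i.val + 1), hs.1, ?_, hle _ hs.1, by simp [expandVec, h]⟩
    rw [pow_succ] at h2
    omega

theorem aux_perm {m : ℕ} (s : Finset (Fin m)) (f : Fin m → Fin m) (hf : Set.InjOn f s) :
    ∃ π : Equiv.Perm (Fin m), ∀ i ∈ s, π i = f i := by
  obtain ⟨g, hg⟩ := Finset.exists_equiv_extend_of_card_eq (t := (Finset.univ : Finset (Fin m)))
    (by simp) (s := s) (f := f) (by simp) hf
  exact ⟨g.trans (Equiv.subtypeUnivEquiv (by simp)), fun i hi => hg i hi⟩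

theorem aux_bdd {m : ℕ} (k : ℕ) (u : Fin m → ℝ) :
    BddAbove {t : ℝ | ∃ S : Finset (Fin m), S.card = k ∧ t = ∑ j ∈ S, |u j|} := by
  refine ⟨∑ j, |u j|, ?_⟩
  rintro t ⟨S, -, rfl⟩
  exact Finset.sum_le_sum_of_subset_of_nonneg (Finset.subset_univ _) (fun _ _ _ => abs_nonneg _)

/-- If `o ∈ ℝ^m` is non-increasing and nonnegative, and `ρ : POS → ℝ_{≥0}` is
non-increasing with `ρ_k ≤ 2·o_k + o_1/m` on `POS = {min(2^s,m)}`, then the expansion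
`ρ⃗` satisfies `Top_k(ρ⃗) ≤ 4·Top_k(o)` for `k ∈ POS`, `Top_k(ρ⃗) ≤ 8·Top_k(o)` for all
`k ∈ {1,…,m}`, and hence `φ(ρ⃗) ≤ 8·φ(o)` for every symmetric monotone norm `φ`. -/
theorem expansion_norm_bound_pow2 {m : ℕ} (hm : 1 ≤ m)
    (o : Fin m → ℝ) (ho_mono : Antitone o) (ho_nn : ∀ i, 0 ≤ o i)
    (ρ : ℕ → ℝ)
    (hρ_nn : ∀ k ∈ pow2POS m, 0 ≤ ρ k)
    (hρ_mono : ∀ k ∈ pow2POS m, ∀ k' ∈ pow2POS m, k ≤ k' → ρ k' ≤ ρ k)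
    (hρ_le : ∀ k ∈ pow2POS m, ρ k ≤ 2 * ent o k + ent o 1 / m) :
    (∀ k ∈ pow2POS m,
        topk k (expandVec m (pow2POS m) ρ) ≤ 4 * topk k o) ∧
    (∀ k, 1 ≤ k → k ≤ m →
        topk k (expandVec m (pow2POS m) ρ) ≤ 8 * topk k o) ∧
    (∀ φ : (Fin m → ℝ) → ℝ,
        (∀ w, φ w = 0 ↔ w = 0) →
        (∀ w₁ w₂, φ (w₁ + w₂) ≤ φ w₁ + φ w₂) →
        (∀ (θ : ℝ) w, φ (θ • w) = |θ| * φ w) →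
        (∀ w₁ w₂, (∀ i, 0 ≤ w₁ i) → (∀ i, w₁ i ≤ w₂ i) → φ w₁ ≤ φ w₂) →
        (∀ w (π : Equiv.Perm (Fin m)), φ (w ∘ π) = φ w) →
        φ (expandVec m (pow2POS m) ρ) ≤ 8 * φ o) := by
  have hle : ∀ p ∈ pow2POS m, p ≤ m := by
    rintro p ⟨s, rfl⟩
    exact min_le_right _ _
  have hmpos : (0 : ℝ) < m := by exact_mod_cast hm
  obtain ⟨O, hOdef⟩ : ∃ O : ℕ → ℝ, O = fun n => if h : n < m then o ⟨n, h⟩ else 0 := ⟨_, rfl⟩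
  have hOnn : ∀ n, 0 ≤ O n := by
    intro n; rw [hOdef]; dsimp only; split_ifs with h
    · exact ho_nn _
    · exact le_rfl
  have hOanti : Antitone O := by
    intro a b hab
    rw [hOdef]; dsimp only
    by_cases hb : b < m
    · rw [dif_pos hb, dif_pos (lt_of_le_of_lt hab hb)]
      exact ho_mono hab
    · rw [dif_neg hb]; split_ifs with h
      · exact ho_nn _
      · exact le_rfl
  have hOv : ∀ i : Fin m, O i.val = o i := by
    intro i; rw [hOdef]; simp
  have hent : ∀ k, ent o k = O (k - 1) := by
    intro k; rw [hOdef]; rfl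
  have hE_nn : ∀ i, 0 ≤ expandVec m (pow2POS m) ρ i := by
    intro i
    obtain ⟨p, hp, -, -, e⟩ := aux_pos ρ i
    rw [e]; exact hρ_nn p hp
  have hE_le : ∀ i : Fin m, expandVec m (pow2POS m) ρ i ≤ 2 * O ((i.val + 1) / 2) + O 0 / m := by
    intro i
    obtain ⟨p, hp, h2, -, e⟩ := aux_pos ρ i
    rw [e]
    have h := hρ_le p hp
    rw [hent, hent] at h
    have h' : O (p - 1) ≤ O ((i.val + 1) / 2) := hOanti (by omega)
    simp only [Nat.sub_self] at h
    linarith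
  have h4 : ∀ k, 1 ≤ k → k ≤ m →
      topk k (expandVec m (pow2POS m) ρ) ≤ 4 * topk k o ∧ 0 ≤ topk k o := by
    intro k hk1 hkm
    have hlow : ∑ i ∈ Finset.range k, O i ≤ topk k o := by
      refine le_csSup (aux_bdd k o) ⟨Finset.univ.map (Fin.castLEEmb hkm), by simp, ?_⟩
      rw [Finset.sum_map, Finset.sum_range]
      refine Finset.sum_congr rfl (fun i _ => ?_)
      rw [abs_of_nonneg (ho_nn _), ← hOv]
      rfl
    refine ⟨?_, le_trans (Finset.sum_nonneg fun i _ => hOnn i) hlow⟩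
    refine csSup_le ⟨_, Finset.univ.map (Fin.castLEEmb hkm), by simp, rfl⟩ ?_
    rintro t ⟨S, hS, rfl⟩
    have ha : Antitone (fun n : ℕ => 2 * O ((n + 1) / 2) + O 0 / m) := by
      intro a b hab
      have : O ((b + 1) / 2) ≤ O ((a + 1) / 2) := hOanti (by omega)
      dsimp only
      linarith
    have h1 : ∑ j ∈ S, |expandVec m (pow2POS m) ρ j|
        ≤ ∑ j ∈ S.map Fin.valEmbedding, (2 * O ((j + 1) / 2) + O 0 / m) := by
      rw [Finset.sum_map]
      refine Finset.sum_le_sum (fun i _ => ?_)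
      rw [abs_of_nonneg (hE_nn i)]
      exact hE_le i
    have h2 := h1.trans (aux_sum_le _ ha (S.map Fin.valEmbedding))
    rw [Finset.card_map, hS, Finset.sum_add_distrib, ← Finset.mul_sum, Finset.sum_const,
      Finset.card_range, nsmul_eq_mul] at h2
    obtain ⟨k', rfl⟩ : ∃ k', k = k' + 1 := ⟨k - 1, by omega⟩
    have h3 := aux_half O hOanti hOnn k'
    have h5 : ((k' + 1 : ℕ) : ℝ) * (O 0 / m) ≤ O 0 := by
      have : ((k' + 1 : ℕ) : ℝ) ≤ m := by exact_mod_cast hkm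
      calc ((k' + 1 : ℕ) : ℝ) * (O 0 / m) ≤ m * (O 0 / m) := by
            have := div_nonneg (hOnn 0) hmpos.le
            gcongr
        _ = O 0 := by field_simp
    have := hOnn 0
    linarith
  refine ⟨?_, ?_, ?_⟩
  · intro k hk
    refine (h4 k ?_ (hle k hk)).1
    obtain ⟨s, rfl⟩ := hk
    exact le_min Nat.one_le_two_pow hm
  · intro k hk1 hkm
    have := h4 k hk1 hkm
    linarith [this.1, this.2]
  · intro φ h0 hadd hsmul hmono hsymm
    have hperm : ∀ (s : Finset (Fin m)) (f : Fin m → Fin m) (w : Fin m → ℝ), Set.InjOn f s →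
        (∀ i, 0 ≤ w i) → (∀ i ∈ s, w i ≤ o (f i)) → (∀ i ∉ s, w i = 0) → φ w ≤ φ o := by
      intro s f w hf hw hs hns
      obtain ⟨π, hπ⟩ := aux_perm s f hf
      rw [← hsymm o π]
      refine hmono _ _ hw (fun i => ?_)
      by_cases hi : i ∈ s
      · simpa [hπ i hi] using hs i hi
      · rw [hns i hi]; exact ho_nn _
    let f : Fin m → Fin m := fun i => ⟨(i.val + 1) / 2, by have := i.isLt; omega⟩
    have hfO : ∀ i, o (f i) = O ((i.val + 1) / 2) := fun i => (hOv (f i)).symm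
    let a : Fin m → ℝ := fun i => if i.val % 2 = 0 then O ((i.val + 1) / 2) else 0
    let b : Fin m → ℝ := fun i => if i.val % 2 = 1 then O ((i.val + 1) / 2) else 0
    have hinj : ∀ r, Set.InjOn f
        (Finset.univ.filter (fun i : Fin m => i.val % 2 = r) : Finset (Fin m)) := by
      intro r i hi j hj hij
      simp only [Finset.coe_filter, Finset.mem_univ, true_and, Set.mem_setOf_eq] at hi hj
      have : (i.val + 1) / 2 = (j.val + 1) / 2 := congrArg Fin.val hij
      apply Fin.ext
      omega
    have hA : φ a ≤ φ o := by
      refine hperm _ f a (hinj 0) (fun i => ?_) (fun i hi => ?_) (fun i hi => ?_)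
      · dsimp only [a]; split_ifs
        · exact hOnn _
        · exact le_rfl
      · simp only [Finset.mem_filter, Finset.mem_univ, true_and] at hi
        simp [a, hi, hfO]
      · simp only [Finset.mem_filter, Finset.mem_univ, true_and] at hi
        simp only [a, if_neg hi]
    have hB : φ b ≤ φ o := by
      refine hperm _ f b (hinj 1) (fun i => ?_) (fun i hi => ?_) (fun i hi => ?_)
      · dsimp only [b]; split_ifs
        · exact hOnn _
        · exact le_rfl
      · simp only [Finset.mem_filter, Finset.mem_univ, true_and] at hi
        simp [b, hi, hfO]
      · simp only [Finset.mem_filter, Finset.mem_univ, true_and] at hi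
        simp only [b, if_neg hi]
    let z : Fin m := ⟨0, hm⟩
    have hz : o z = O 0 := (hOv z).symm
    have hsingle : ∀ j : Fin m, φ (Pi.single j (O 0)) ≤ φ o := by
      intro j
      refine hperm {j} (fun _ => z) _ (by simp) (fun i => ?_) (fun i hi => ?_) (fun i hi => ?_)
      · by_cases h : i = j
        · subst h; simpa using hOnn 0
        · simp [h]
      · rw [Finset.mem_singleton] at hi
        subst hi; simp [hz]
      · rw [Finset.mem_singleton] at hi
        simp [hi]
    have hC : φ (∑ j : Fin m, Pi.single j (O 0)) ≤ m * φ o := by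
      calc φ (∑ j : Fin m, Pi.single j (O 0)) ≤ ∑ j : Fin m, φ (Pi.single j (O 0)) :=
            Finset.le_sum_of_subadditive φ ((h0 0).2 rfl).le hadd _ _
        _ ≤ ∑ j : Fin m, φ o := Finset.sum_le_sum (fun j _ => hsingle j)
        _ = m * φ o := by simp
    have hD : φ ((1 / m : ℝ) • ∑ j : Fin m, Pi.single j (O 0)) ≤ φ o := by
      rw [hsmul, abs_of_nonneg (by positivity)]
      calc (1 / m : ℝ) * φ (∑ j : Fin m, Pi.single j (O 0)) ≤ (1 / m : ℝ) * (m * φ o) := by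
            gcongr
        _ = φ o := by field_simp
    have hφ : 0 ≤ φ o := by
      rw [← (h0 0).2 rfl]
      exact hmono _ _ (fun _ => le_rfl) ho_nn
    have hmain : φ (expandVec m (pow2POS m) ρ)
        ≤ φ ((2 : ℝ) • (a + b) + (1 / m : ℝ) • ∑ j : Fin m, Pi.single j (O 0)) := by
      refine hmono _ _ hE_nn (fun i => (hE_le i).trans (le_of_eq ?_))
      have hab : a i + b i = O ((i.val + 1) / 2) := by
        rcases Nat.mod_two_eq_zero_or_one i.val with h | h <;> simp [a, b, h]
      have hc : (∑ j : Fin m, (Pi.single j (O 0) : Fin m → ℝ)) i = O 0 := by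
        rw [Finset.sum_apply]; simp [Pi.single_apply]
      rw [Pi.add_apply, Pi.smul_apply, Pi.smul_apply, Pi.add_apply, hab, hc]
      simp only [smul_eq_mul]
      ring
    have h5 := hadd ((2 : ℝ) • (a + b)) ((1 / m : ℝ) • ∑ j : Fin m, Pi.single j (O 0))
    have h6 := hadd a b
    have h7 : φ ((2 : ℝ) • (a + b)) = 2 * φ (a + b) := by rw [hsmul]; norm_num
    linarith
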